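/- arXiv:1902.04194 — 3 statements merged into one kernel-verified Lean document; each statement's English description precedes it below -/
import Mathlib

section
/- Let x > 1 be a real number. Then 2x Σ_{a ≤ x} φ(a)/a − Σ_{a ≤ x} φ(a) ≥ (9/π²) x² f(x), where f(x) = 1 − (π²/9)(log x + 9)/(3x) and the sums range over positive integers a ≤ x. -/
open Real

/-!
Substituting `φ(a) = ∑_{dk = a} μ(d) k` turns the left-hand side into
`∑_{d ≤ x} μ(d) g(x / d)` with `g(y) = ∑_{k ≤ y} (2y - k)`, and `g(y)` differs from
`3/2 y² - y` by at most `y / 2`. So the sum is at least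
`3/2 x² ∑ μ(d)/d² - x ∑ μ(d)/d - x/2 ∑ |μ(d)|/d`, all sums running over `d ≤ x`.

* `∑_{d ≤ x} μ(d)/d²` falls short of `6/π²` by at most `0.93/x`; since `μ` vanishes on multiples
  of `4`, this beats the trivial `1/x`.
* `∑_{d ≤ x} μ(d)/d ≤ 1`.
* `∑_{d ≤ x} |μ(d)|/d ≤ 2/3 log x + 1.18`: discarding the multiples of `4` and of `9` leaves the
  proportion `(1 - 1/4)(1 - 1/9) = 2/3` of all integers. This is the source of the term
  `x log x / 3`.

The error linear in `x` is therefore at most `3/2 · 0.93 + 1 + 1.18/2 < 3` times `x`. The first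
and the third bound are used for `x ≥ 5`; below that the term `a = 1` of the sum suffices.
-/

open Filter Topology

open scoped ArithmeticFunction.Moebius ArithmeticFunction.zeta

/-! ### Totient sums in terms of the Möbius function -/

theorem moebius_mul_id_apply (n : ℕ) :
    ((μ : ArithmeticFunction ℝ) * (ArithmeticFunction.id : ArithmeticFunction ℝ)) n =
      Nat.totient n := by
  rcases n.eq_zero_or_pos with rfl | hn
  · simp
  · rw [ArithmeticFunction.mul_apply]
    refine (ArithmeticFunction.sum_eq_iff_sum_mul_moebius_eq (f := fun m => (Nat.totient m : ℝ))
      (g := fun m => (m : ℝ))).1 (fun m _ => ?_) n hn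
    exact_mod_cast Nat.sum_totient m

theorem sum_totient_eq_sum_moebius (N : ℕ) :
    ∑ n ∈ Finset.Ioc 0 N, (Nat.totient n : ℝ) =
      ∑ d ∈ Finset.Ioc 0 N, (μ d : ℝ) * ∑ k ∈ Finset.Ioc 0 (N / d), (k : ℝ) := by
  simpa only [moebius_mul_id_apply, ArithmeticFunction.intCoe_apply,
    ArithmeticFunction.natCoe_apply, ArithmeticFunction.id_apply] using
    ArithmeticFunction.sum_Ioc_mul_eq_sum_sum (μ : ArithmeticFunction ℝ)
      (ArithmeticFunction.id : ArithmeticFunction ℝ) N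

theorem totient_div_eq_sum_moebius_div (n : ℕ) :
    (Nat.totient n : ℝ) / n = ∑ d ∈ n.divisors, (μ d : ℝ) / d := by
  rw [← moebius_mul_id_apply, ArithmeticFunction.mul_apply, Finset.sum_div,
    ← Nat.sum_divisorsAntidiagonal fun d _ => (μ d : ℝ) / d]
  refine Finset.sum_congr rfl fun p hp => ?_
  obtain ⟨rfl, hp0⟩ := Nat.mem_divisorsAntidiagonal.1 hp
  have hk : (p.2 : ℝ) ≠ 0 := by exact_mod_cast right_ne_zero_of_mul hp0
  simp only [ArithmeticFunction.intCoe_apply, ArithmeticFunction.natCoe_apply,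
    ArithmeticFunction.id_apply, Nat.cast_mul]
  exact mul_div_mul_right _ _ hk

theorem sum_totient_div_eq_sum_moebius_div (N : ℕ) :
    ∑ n ∈ Finset.Ioc 0 N, (Nat.totient n : ℝ) / n =
      ∑ d ∈ Finset.Ioc 0 N, (μ d : ℝ) / d * (N / d : ℕ) := by
  let f : ArithmeticFunction ℝ := ⟨fun d => (μ d : ℝ) / d, by simp⟩
  have hf : ∀ n, (f * ζ) n = (Nat.totient n : ℝ) / n := fun n => by
    rw [ArithmeticFunction.coe_mul_zeta_apply, totient_div_eq_sum_moebius_div]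
    rfl
  have hsum := ArithmeticFunction.sum_Ioc_mul_zeta_eq_sum f N
  rwa [Finset.sum_congr rfl fun n _ => hf n] at hsum

/-- The sum `∑_{a ≤ x} (2x / a - 1) φ(a)`, that is `2x ∑ φ(a) / a - ∑ φ(a)` combined term by term,
so that every summand is nonnegative. -/
noncomputable def weightedTotientSum (x : ℝ) : ℝ :=
  ∑ a ∈ Finset.Ioc 0 ⌊x⌋₊, (2 * (x / a) - 1) * Nat.totient a

theorem weightedTotientSum_eq_sub (x : ℝ) :
    weightedTotientSum x = 2 * x * ∑ a ∈ Finset.Ioc 0 ⌊x⌋₊, (Nat.totient a : ℝ) / a -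
      ∑ a ∈ Finset.Ioc 0 ⌊x⌋₊, (Nat.totient a : ℝ) := by
  rw [weightedTotientSum, Finset.mul_sum, ← Finset.sum_sub_distrib]
  exact Finset.sum_congr rfl fun a _ => by ring

theorem weightedTotientSum_eq_sum_moebius (x : ℝ) :
    weightedTotientSum x =
      ∑ d ∈ Finset.Ioc 0 ⌊x⌋₊, (μ d : ℝ) * ∑ k ∈ Finset.Ioc 0 ⌊x / d⌋₊, (2 * (x / d) - k) := by
  rw [weightedTotientSum_eq_sub, sum_totient_eq_sum_moebius, sum_totient_div_eq_sum_moebius_div,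
    Finset.mul_sum, ← Finset.sum_sub_distrib]
  refine Finset.sum_congr rfl fun d _ => ?_
  rw [Nat.floor_div_natCast, Finset.sum_sub_distrib, Finset.sum_const, Nat.card_Ioc, nsmul_eq_mul,
    Nat.sub_zero]
  ring

theorem sum_Ioc_natCast (n : ℕ) : ∑ k ∈ Finset.Ioc 0 n, (k : ℝ) = n * (n + 1) / 2 := by
  induction n with
  | zero => simp
  | succ n ih =>
    rw [Finset.sum_Ioc_succ_top n.zero_le, ih]
    push_cast
    ring

theorem abs_sum_two_mul_sub_sub_le {y : ℝ} (hy : 1 ≤ y) :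
    |∑ k ∈ Finset.Ioc 0 ⌊y⌋₊, (2 * y - k) - (3 / 2 * y ^ 2 - y)| ≤ y / 2 := by
  have hfloor_le : (⌊y⌋₊ : ℝ) ≤ y := Nat.floor_le (by linarith)
  have hlt_floor : y < ⌊y⌋₊ + 1 := Nat.lt_floor_add_one y
  rw [Finset.sum_sub_distrib, sum_Ioc_natCast, Finset.sum_const, Nat.card_Ioc, nsmul_eq_mul,
    Nat.sub_zero, abs_le]
  constructor <;> nlinarith

theorem one_le_div_of_mem_Ioc_floor {x : ℝ} {d : ℕ} (hd : d ∈ Finset.Ioc 0 ⌊x⌋₊) : 1 ≤ x / d := by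
  obtain ⟨hd0, hdx⟩ := Finset.mem_Ioc.1 hd
  exact (one_le_div (by exact_mod_cast hd0)).2 ((Nat.le_floor_iff' hd0.ne').1 hdx)

theorem le_weightedTotientSum (x : ℝ) :
    3 / 2 * x ^ 2 * ∑ d ∈ Finset.Ioc 0 ⌊x⌋₊, (μ d : ℝ) / (d : ℝ) ^ 2 -
        x * ∑ d ∈ Finset.Ioc 0 ⌊x⌋₊, (μ d : ℝ) / d -
        x / 2 * ∑ d ∈ Finset.Ioc 0 ⌊x⌋₊, |(μ d : ℝ)| / d ≤ weightedTotientSum x := by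
  rw [weightedTotientSum_eq_sum_moebius, Finset.mul_sum, Finset.mul_sum, Finset.mul_sum,
    ← Finset.sum_sub_distrib, ← Finset.sum_sub_distrib]
  refine Finset.sum_le_sum fun d hd => ?_
  have hy : 1 ≤ x / d := one_le_div_of_mem_Ioc_floor hd
  set y := x / d
  set g := ∑ k ∈ Finset.Ioc 0 ⌊y⌋₊, (2 * y - k)
  have herror : |(μ d : ℝ) * (g - (3 / 2 * y ^ 2 - y))| ≤ |(μ d : ℝ)| * (y / 2) := by
    rw [abs_mul]
    exact mul_le_mul_of_nonneg_left (abs_sum_two_mul_sub_sub_le hy) (abs_nonneg _)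
  calc 3 / 2 * x ^ 2 * ((μ d : ℝ) / (d : ℝ) ^ 2) - x * (μ d / d) - x / 2 * (|(μ d : ℝ)| / d)
      = μ d * (3 / 2 * y ^ 2 - y) - |(μ d : ℝ)| * (y / 2) := by ring
    _ ≤ μ d * g := by linarith [neg_le_of_abs_le herror]

theorem two_mul_sub_one_le_weightedTotientSum {x : ℝ} (hx : 1 ≤ x) :
    2 * x - 1 ≤ weightedTotientSum x := by
  have hnonneg : ∀ a ∈ Finset.Ioc 0 ⌊x⌋₊, 0 ≤ (2 * (x / a) - 1) * (Nat.totient a : ℝ) := by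
    intro a ha
    have hone := one_le_div_of_mem_Ioc_floor ha
    exact mul_nonneg (by linarith) (Nat.cast_nonneg _)
  have hmem : 1 ∈ Finset.Ioc 0 ⌊x⌋₊ :=
    Finset.mem_Ioc.2 ⟨one_pos, Nat.le_floor (by exact_mod_cast hx)⟩
  simpa [weightedTotientSum] using Finset.single_le_sum hnonneg hmem

/-! ### Partial sums of `μ(d) / d` -/

theorem abs_moebius_cast_le_one (n : ℕ) : |(μ n : ℝ)| ≤ 1 := by
  exact_mod_cast ArithmeticFunction.abs_moebius_le_one (n := n)

theorem sum_moebius_mul_div {N : ℕ} (hN : N ≠ 0) :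
    ∑ d ∈ Finset.Ioc 0 N, (μ d : ℝ) * (N / d : ℕ) = 1 := by
  have h := ArithmeticFunction.sum_Ioc_mul_zeta_eq_sum (μ : ArithmeticFunction ℝ) N
  simp only [ArithmeticFunction.coe_moebius_mul_coe_zeta, ArithmeticFunction.one_apply,
    ArithmeticFunction.intCoe_apply, Finset.sum_ite_eq', Finset.mem_Ioc] at h
  rw [← h, if_pos ⟨one_pos, Nat.one_le_iff_ne_zero.2 hN⟩]

theorem abs_sum_moebius_div_le_one (N : ℕ) :
    |∑ d ∈ Finset.Ioc 0 N, (μ d : ℝ) / d| ≤ 1 := by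
  rcases N.eq_zero_or_pos with rfl | hN
  · simp
  have hN' : (0 : ℝ) < N := by exact_mod_cast hN
  have hfloor (d : ℕ) :
      (N : ℝ) * (μ d / d) = μ d * (N / d : ℕ) + μ d * Int.fract ((N : ℝ) / d) := by
    rw [← Nat.floor_div_eq_div (K := ℝ), ← Int.self_sub_floor,
      ← natCast_floor_eq_intCast_floor (by positivity)]
    ring
  have hfract (d : ℕ) : |(μ d : ℝ) * Int.fract ((N : ℝ) / d)| ≤ 1 := by
    rw [abs_mul, Int.abs_fract]
    exact mul_le_one₀ (abs_moebius_cast_le_one d) (Int.fract_nonneg _) (Int.fract_lt_one _).le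
  have hsum : |∑ d ∈ Finset.Ioc 0 N, (μ d : ℝ) * Int.fract ((N : ℝ) / d)| ≤ N - 1 := by
    -- The fractional part vanishes at `d = 1`, which saves one term.
    calc |∑ d ∈ Finset.Ioc 0 N, (μ d : ℝ) * Int.fract ((N : ℝ) / d)|
        = |∑ d ∈ Finset.Ioc 1 N, (μ d : ℝ) * Int.fract ((N : ℝ) / d)| := by
          rw [← Finset.sum_Ioc_consecutive _ zero_le_one hN,
            show Finset.Ioc 0 1 = {1} from rfl]
          simp
      _ ≤ ∑ _d ∈ Finset.Ioc 1 N, (1 : ℝ) :=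
          (Finset.abs_sum_le_sum_abs _ _).trans (Finset.sum_le_sum fun d _ => hfract d)
      _ = N - 1 := by simp [Nat.cast_pred hN]
  have hmul : N * ∑ d ∈ Finset.Ioc 0 N, (μ d : ℝ) / d =
      1 + ∑ d ∈ Finset.Ioc 0 N, (μ d : ℝ) * Int.fract ((N : ℝ) / d) := by
    rw [Finset.mul_sum, Finset.sum_congr rfl fun d _ => hfloor d, Finset.sum_add_distrib,
      sum_moebius_mul_div hN.ne']
  rw [← mul_le_mul_iff_right₀ hN', ← abs_of_pos hN', ← abs_mul, abs_of_pos hN', hmul, mul_one]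
  exact (abs_add_le _ _).trans (by rw [abs_one]; linarith)

/-! ### Partial sums of `μ(d) / d ^ 2` -/

theorem hasSum_moebius_div_sq : HasSum (fun n : ℕ => (μ n : ℝ) / (n : ℝ) ^ 2) (6 / π ^ 2) := by
  have h2 : 1 < (2 : ℂ).re := by norm_num
  have hpi : (π : ℂ) ≠ 0 := by exact_mod_cast Real.pi_ne_zero
  have hvalue : LSeries (fun n => ((μ n : ℤ) : ℂ)) 2 = ((6 / π ^ 2 : ℝ) : ℂ) := by
    have hprod := LSeries_one_mul_Lseries_moebius h2
    rw [LSeries_one_eq_riemannZeta h2, riemannZeta_two] at hprod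
    push_cast
    field_simp at hprod ⊢
    linear_combination hprod
  have hsum := (ArithmeticFunction.LSeriesSummable_moebius_iff.2 h2).LSeriesHasSum
  rw [hvalue, LSeriesHasSum] at hsum
  rw [← Complex.hasSum_ofReal]
  convert hsum using 2 with n
  rcases eq_or_ne n 0 with rfl | hn
  · simp
  · simp [LSeries.term_of_ne_zero hn]

theorem moebius_eq_zero_of_sq_dvd {m n : ℕ} (hm : m ≠ 1) (h : m ^ 2 ∣ n) : μ n = 0 :=
  ArithmeticFunction.moebius_eq_zero_of_not_squarefree fun hn =>
    hm (Nat.isUnit_iff.1 (hn m (sq m ▸ h)))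

theorem add_one_eq_mul_div_add_one_of_dvd {m n : ℕ} (h : m ∣ n + 1) : n + 1 = m * (n / m + 1) := by
  rw [← Nat.succ_div_of_dvd h, Nat.mul_div_cancel' h]

/-- An upper bound for the tail `∑_{d > N} μ(d) / d²` that uses only `|μ| ≤ 1` and the vanishing of
`μ` on the multiples of `q²`: the first summand is a telescoping upper bound for `∑_{d > N} 1 / d²`,
the second a telescoping lower bound for the part of it with `q² ∣ d`. The quotient `N / q ^ 2` is
rounded down. -/
noncomputable def moebiusTailBound (q N : ℕ) : ℝ :=
  1 / (N + 1 / 2) - 1 / (q ^ 4 * ((N / q ^ 2 : ℕ) + 1))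

theorem one_div_add_one_sq_le {t : ℝ} (ht : 0 ≤ t) :
    1 / (t + 1) ^ 2 ≤ 1 / (t + 1 / 2) - 1 / (t + 1 + 1 / 2) := by
  rw [div_sub_div _ _ (by positivity) (by positivity), div_le_div_iff₀ (by positivity)
    (by positivity)]
  nlinarith

theorem one_div_sub_one_div_le_one_div_add_one_sq {t : ℝ} (ht : 0 ≤ t) :
    1 / (t + 1) - 1 / (t + 1 + 1) ≤ 1 / (t + 1) ^ 2 := by
  rw [div_sub_div _ _ (by positivity) (by positivity), div_le_div_iff₀ (by positivity)
    (by positivity)]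
  nlinarith

theorem moebius_div_sq_le_moebiusTailBound_sub {q : ℕ} (hq : q ≠ 1) (N : ℕ) :
    (μ (N + 1) : ℝ) / ((N + 1 : ℕ) : ℝ) ^ 2 ≤
      moebiusTailBound q N - moebiusTailBound q (N + 1) := by
  have hstep := one_div_add_one_sq_le N.cast_nonneg
  simp only [moebiusTailBound, Nat.cast_add_one]
  by_cases h : q ^ 2 ∣ N + 1
  · have hN : (N : ℝ) + 1 = q ^ 2 * ((N / q ^ 2 : ℕ) + 1) := by
      exact_mod_cast add_one_eq_mul_div_add_one_of_dvd h
    rw [moebius_eq_zero_of_sq_dvd hq h, Nat.succ_div_of_dvd h, Nat.cast_add_one]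
    set j : ℝ := ((N / q ^ 2 : ℕ) : ℝ)
    have hmultiple : 1 / (q ^ 4 * (j + 1)) - 1 / (q ^ 4 * (j + 1 + 1)) ≤ 1 / ((N : ℝ) + 1) ^ 2 :=
      calc 1 / (q ^ 4 * (j + 1)) - 1 / (q ^ 4 * (j + 1 + 1))
          = 1 / (q : ℝ) ^ 4 * (1 / (j + 1) - 1 / (j + 1 + 1)) := by
            simp only [one_div, mul_inv]; ring
        _ ≤ 1 / (q : ℝ) ^ 4 * (1 / (j + 1) ^ 2) := by
            gcongr
            exact one_div_sub_one_div_le_one_div_add_one_sq (Nat.cast_nonneg _)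
        _ = 1 / ((N : ℝ) + 1) ^ 2 := by rw [hN]; simp only [one_div, mul_inv, mul_pow]; ring
    rw [Int.cast_zero, zero_div]
    linarith
  · have hμ : (μ (N + 1) : ℝ) / ((N : ℝ) + 1) ^ 2 ≤ 1 / ((N : ℝ) + 1) ^ 2 := by
      gcongr
      exact (le_abs_self _).trans (abs_moebius_cast_le_one _)
    rw [Nat.succ_div_of_not_dvd h]
    linarith

theorem tendsto_moebiusTailBound {q : ℕ} (hq : q ≠ 0) :
    Tendsto (moebiusTailBound q) atTop (𝓝 0) := by
  have hall : Tendsto (fun N : ℕ => 1 / ((N : ℝ) + 1 / 2)) atTop (𝓝 0) :=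
    tendsto_const_nhds.div_atTop (tendsto_atTop_add_const_right _ _ tendsto_natCast_atTop_atTop)
  have hmultiples : Tendsto (fun N : ℕ => 1 / ((q : ℝ) ^ 4 * ((N / q ^ 2 : ℕ) + 1)))
      atTop (𝓝 0) :=
    tendsto_const_nhds.div_atTop (Tendsto.const_mul_atTop (by positivity)
      (tendsto_atTop_add_const_right _ _ (tendsto_natCast_atTop_atTop.comp
        (Nat.tendsto_div_const_atTop (pow_ne_zero 2 hq)))))
  simpa only [sub_zero] using! hall.sub hmultiples

theorem six_div_pi_sq_le_sum_moebius_div_sq_add {q : ℕ} (hq : 1 < q) (N : ℕ) :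
    6 / π ^ 2 ≤ ∑ d ∈ Finset.Ioc 0 N, (μ d : ℝ) / (d : ℝ) ^ 2 + moebiusTailBound q N := by
  have hanti : Antitone fun N : ℕ =>
      ∑ d ∈ Finset.Ioc 0 N, (μ d : ℝ) / (d : ℝ) ^ 2 + moebiusTailBound q N := by
    refine antitone_nat_of_succ_le fun n => ?_
    rw [Finset.sum_Ioc_succ_top n.zero_le]
    linarith [moebius_div_sq_le_moebiusTailBound_sub hq.ne' n]
  have hsum : Tendsto (fun N : ℕ => ∑ d ∈ Finset.Ioc 0 N, (μ d : ℝ) / (d : ℝ) ^ 2)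
      atTop (𝓝 (6 / π ^ 2)) := by
    refine (hasSum_moebius_div_sq.tendsto_sum_nat.comp (tendsto_add_atTop_nat 1)).congr fun n => ?_
    simp only [Function.comp_apply]
    rw [Finset.range_eq_Ico, Finset.sum_eq_sum_Ico_succ_bot n.succ_pos,
      Nat.succ_eq_add_one, Finset.Ico_add_one_add_one_eq_Ioc]
    simp
  refine hanti.le_of_tendsto ?_ N
  simpa only [add_zero] using hsum.add (tendsto_moebiusTailBound (by lia))

theorem moebiusTailBound_two_le {N : ℕ} (hN : 5 ≤ N) : moebiusTailBound 2 N ≤ 0.93 / (N + 1) := by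
  have hN' : (5 : ℝ) ≤ N := by exact_mod_cast hN
  have hdiv : ((N / 2 ^ 2 : ℕ) : ℝ) ≤ N / 4 := by exact_mod_cast Nat.cast_div_le (α := ℝ)
  calc moebiusTailBound 2 N
      ≤ 1 / (N + 1 / 2) - 1 / (4 * (N + 4)) := by
        have hmultiples : 1 / (4 * ((N : ℝ) + 4)) ≤ 1 / (16 * ((N / 2 ^ 2 : ℕ) + 1)) :=
          one_div_le_one_div_of_le (by positivity) (by linarith)
        rw [moebiusTailBound, Nat.cast_ofNat, show (2 : ℝ) ^ 4 = 16 by norm_num]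
        exact sub_le_sub_left hmultiples _
    _ ≤ 0.93 / (N + 1) := by
        rw [div_sub_div _ _ (by positivity) (by positivity), div_le_div_iff₀ (by positivity)
          (by positivity)]
        nlinarith

/-! ### Partial sums of `|μ(d)| / d` -/

theorem sum_ite_dvd_one_div_eq_harmonic_div (m N : ℕ) :
    ∑ d ∈ Finset.Ioc 0 N, (if m ∣ d then 1 / (d : ℝ) else 0) = harmonic (N / m) / m := by
  induction N with
  | zero => simp
  | succ N ih =>
    rw [Finset.sum_Ioc_succ_top N.zero_le, ih, Nat.succ_div]
    split_ifs with h
    · rw [harmonic_succ, add_one_eq_mul_div_add_one_of_dvd h]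
      push_cast
      rw [add_div, one_div, mul_inv_rev, div_eq_mul_inv _ (m : ℝ), div_eq_mul_inv _ (m : ℝ)]
    · rw [add_zero, add_zero]

theorem abs_moebius_le_of_coprime {p q : ℕ} (hp : p ≠ 1) (hq : q ≠ 1) (hpq : p.Coprime q) (d : ℕ) :
    |(μ d : ℝ)| ≤ 1 - (if p ^ 2 ∣ d then 1 else 0) - (if q ^ 2 ∣ d then 1 else 0) +
      (if p ^ 2 * q ^ 2 ∣ d then 1 else 0) := by
  have hdvd : p ^ 2 * q ^ 2 ∣ d ↔ p ^ 2 ∣ d ∧ q ^ 2 ∣ d :=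
    ⟨fun h => ⟨dvd_of_mul_right_dvd h, dvd_of_mul_left_dvd h⟩,
      fun h => (hpq.pow 2 2).mul_dvd_of_dvd_of_dvd h.1 h.2⟩
  by_cases hpd : p ^ 2 ∣ d
  · simp only [moebius_eq_zero_of_sq_dvd hp hpd, hdvd, hpd]
    split_ifs <;> simp_all
  by_cases hqd : q ^ 2 ∣ d
  · simp [moebius_eq_zero_of_sq_dvd hq hqd, hdvd, hpd, hqd]
  · simpa [hdvd, hpd, hqd] using abs_moebius_cast_le_one d

theorem sum_abs_moebius_div_le_harmonic {p q : ℕ} (hp : p ≠ 1) (hq : q ≠ 1) (hpq : p.Coprime q)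
    (N : ℕ) :
    ∑ d ∈ Finset.Ioc 0 N, |(μ d : ℝ)| / d ≤
      harmonic N - harmonic (N / p ^ 2) / p ^ 2 - harmonic (N / q ^ 2) / q ^ 2 +
        harmonic (N / (p ^ 2 * q ^ 2)) / (p ^ 2 * q ^ 2) := by
  have hall := sum_ite_dvd_one_div_eq_harmonic_div 1 N
  have hp2 := sum_ite_dvd_one_div_eq_harmonic_div (p ^ 2) N
  have hq2 := sum_ite_dvd_one_div_eq_harmonic_div (q ^ 2) N
  have hpq2 := sum_ite_dvd_one_div_eq_harmonic_div (p ^ 2 * q ^ 2) N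
  simp only [one_dvd, if_true, Nat.div_one, Nat.cast_one, div_one, Nat.cast_mul, Nat.cast_pow]
    at hall hp2 hq2 hpq2
  rw [← hall, ← hp2, ← hq2, ← hpq2, ← Finset.sum_sub_distrib, ← Finset.sum_sub_distrib,
    ← Finset.sum_add_distrib]
  refine Finset.sum_le_sum fun d _ => ?_
  refine (div_le_div_of_nonneg_right (abs_moebius_le_of_coprime hp hq hpq d)
    d.cast_nonneg).trans_eq ?_
  simp only [add_div, sub_div, ite_div, zero_div]

theorem harmonic_le_log_add_of_le {k n : ℕ} (hk : k ≠ 0) (hkn : k ≤ n) :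
    (harmonic n : ℝ) ≤ log n + (harmonic k - log k) := by
  have h := strictAnti_eulerMascheroniSeq'.antitone hkn
  rw [eulerMascheroniSeq', eulerMascheroniSeq', if_neg (by lia), if_neg hk] at h
  linarith

theorem log_add_one_add_le_harmonic_of_le {k n : ℕ} (hkn : k ≤ n) :
    log (n + 1) + (harmonic k - log (k + 1)) ≤ harmonic n := by
  have h := strictMono_eulerMascheroniSeq.monotone hkn
  simp only [eulerMascheroniSeq] at h
  linarith

theorem harmonic_le_one_add_log_add_one_of_le {k n : ℕ} (hkn : k ≤ n) :
    (harmonic k : ℝ) ≤ 1 + log (n + 1) := by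
  rcases k.eq_zero_or_pos with rfl | hk
  · simpa using add_nonneg zero_le_one (Real.log_nonneg (by simp : (1 : ℝ) ≤ n + 1))
  have hkn' : (k : ℝ) ≤ n + 1 := by exact_mod_cast hkn.trans n.le_succ
  exact (harmonic_le_one_add_log k).trans (by gcongr)

theorem log_sub_log_le_log_div_add_one {m n : ℕ} (hm : m ≠ 0) (hn : n ≠ 0) :
    log n - log m ≤ log ((n / m : ℕ) + 1) := by
  rw [← Real.log_div (by positivity) (by positivity), ← Nat.floor_div_eq_div (K := ℝ)]
  exact Real.log_le_log (by positivity) (Nat.lt_floor_add_one _).le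

theorem sum_abs_moebius_div_le {N : ℕ} (hN : 4 ≤ N) :
    ∑ d ∈ Finset.Ioc 0 N, |(μ d : ℝ)| / d ≤ 2 / 3 * log N + 1.18 := by
  have hsieve : ∑ d ∈ Finset.Ioc 0 N, |(μ d : ℝ)| / d ≤
      harmonic N - harmonic (N / 4) / 4 - harmonic (N / 9) / 9 + harmonic (N / 36) / 36 := by
    convert sum_abs_moebius_div_le_harmonic (p := 2) (q := 3) (by lia) (by lia) (by norm_num) N
      using 4 <;> norm_num
  have hlog4 : log 4 = 2 * log 2 := by
    rw [show (4 : ℝ) = 2 ^ 2 by norm_num, Real.log_pow, Nat.cast_ofNat]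
  have hlog9 : log 9 = 2 * log 3 := by
    rw [show (9 : ℝ) = 3 ^ 2 by norm_num, Real.log_pow, Nat.cast_ofNat]
  have hharmonic : (harmonic N : ℝ) ≤ log N + (25 / 12 - 2 * log 2) := by
    have h := harmonic_le_log_add_of_le four_ne_zero hN
    rw [show harmonic 4 = 25 / 12 by norm_num [harmonic, Finset.sum_range_succ], Nat.cast_ofNat,
      hlog4] at h
    push_cast at h
    exact h
  have hharmonic4 : log N - 2 * log 2 + (1 - log 2) ≤ harmonic (N / 4) := by
    have h := log_add_one_add_le_harmonic_of_le (k := 1) (n := N / 4) (by lia)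
    have hlog := log_sub_log_le_log_div_add_one four_ne_zero (n := N) (by lia)
    rw [show harmonic 1 = 1 by norm_num [harmonic], Nat.cast_one, one_add_one_eq_two] at h
    rw [Nat.cast_ofNat, hlog4] at hlog
    push_cast at h
    linarith
  have hharmonic9 : log ((N / 9 : ℕ) + 1) ≤ harmonic (N / 9) := by
    exact_mod_cast log_add_one_le_harmonic (N / 9)
  have hharmonic36 : (harmonic (N / 36) : ℝ) ≤ 1 + log ((N / 9 : ℕ) + 1) :=
    harmonic_le_one_add_log_add_one_of_le (by lia)
  have hlogN : log N - 2 * log 3 ≤ log ((N / 9 : ℕ) + 1) := by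
    simpa [hlog9] using log_sub_log_le_log_div_add_one (m := 9) (n := N) (by norm_num) (by lia)
  linarith [Real.log_two_gt_d9, Real.log_three_lt_d9]

/-! ### The totient bound -/

theorem le_weightedTotientSum_of_lt_five {x : ℝ} (hx1 : 1 ≤ x) (hx5 : x < 5) :
    9 / π ^ 2 * x ^ 2 - x * log x / 3 - 3 * x ≤ weightedTotientSum x := by
  have hpi : 9 / π ^ 2 ≤ 0.92 := by
    rw [div_le_iff₀ (by positivity)]
    nlinarith [Real.pi_gt_d2]
  have hlog : 0 ≤ x * log x := mul_nonneg (by linarith) (Real.log_nonneg hx1)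
  calc 9 / π ^ 2 * x ^ 2 - x * log x / 3 - 3 * x
      ≤ 0.92 * x ^ 2 - 3 * x := by
        linarith [mul_le_mul_of_nonneg_right hpi (sq_nonneg x)]
    _ ≤ 2 * x - 1 := by nlinarith
    _ ≤ weightedTotientSum x := two_mul_sub_one_le_weightedTotientSum hx1

theorem le_weightedTotientSum_of_five_le {x : ℝ} (hx : 5 ≤ x) :
    9 / π ^ 2 * x ^ 2 - x * log x / 3 - 3 * x ≤ weightedTotientSum x := by
  have hx0 : 0 < x := by linarith
  have hN : 5 ≤ ⌊x⌋₊ := Nat.le_floor (by exact_mod_cast hx)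
  have hsq : 6 / π ^ 2 - 0.93 / x ≤ ∑ d ∈ Finset.Ioc 0 ⌊x⌋₊, (μ d : ℝ) / (d : ℝ) ^ 2 := by
    have htail : 0.93 / ((⌊x⌋₊ : ℝ) + 1) ≤ 0.93 / x := by
      gcongr
      exact (Nat.lt_floor_add_one x).le
    linarith [six_div_pi_sq_le_sum_moebius_div_sq_add one_lt_two ⌊x⌋₊, moebiusTailBound_two_le hN]
  have hlin : ∑ d ∈ Finset.Ioc 0 ⌊x⌋₊, (μ d : ℝ) / d ≤ 1 :=
    le_of_abs_le (abs_sum_moebius_div_le_one _)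
  have habs : ∑ d ∈ Finset.Ioc 0 ⌊x⌋₊, |(μ d : ℝ)| / d ≤ 2 / 3 * log x + 1.18 := by
    have hlog : log ⌊x⌋₊ ≤ log x :=
      Real.log_le_log (by exact_mod_cast (by lia : 0 < ⌊x⌋₊)) (Nat.floor_le hx0.le)
    linarith [sum_abs_moebius_div_le (N := ⌊x⌋₊) (by lia)]
  calc 9 / π ^ 2 * x ^ 2 - x * log x / 3 - 3 * x
      ≤ 3 / 2 * x ^ 2 * (6 / π ^ 2 - 0.93 / x) - x * 1 - x / 2 * (2 / 3 * log x + 1.18) := by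
        have hcancel : 3 / 2 * x ^ 2 * (0.93 / x) = 1.395 * x := by
          field_simp
          norm_num
        have hlead : 3 / 2 * x ^ 2 * (6 / π ^ 2) = 9 / π ^ 2 * x ^ 2 := by ring
        rw [mul_sub, hcancel, hlead]
        linarith
    _ ≤ 3 / 2 * x ^ 2 * ∑ d ∈ Finset.Ioc 0 ⌊x⌋₊, (μ d : ℝ) / (d : ℝ) ^ 2 -
          x * ∑ d ∈ Finset.Ioc 0 ⌊x⌋₊, (μ d : ℝ) / d -
          x / 2 * ∑ d ∈ Finset.Ioc 0 ⌊x⌋₊, |(μ d : ℝ)| / d := by gcongr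
    _ ≤ weightedTotientSum x := le_weightedTotientSum x

/-- Treviño's totient sum bound: for real `x > 1`,
`2x ∑_{a ≤ x} φ(a)/a - ∑_{a ≤ x} φ(a) ≥ (9/π²) x² f(x)` where
`f(x) = 1 - (π²/9)(log x + 9)/(3x)`. -/
theorem stmt_5 (x : ℝ) (hx : 1 < x) :
    (9 / π ^ 2) * x ^ 2 * (1 - (π ^ 2 / 9) * (Real.log x + 9) / (3 * x)) ≤
      2 * x * ∑ a ∈ Finset.Icc 1 ⌊x⌋₊, (Nat.totient a : ℝ) / (a : ℝ) -
        ∑ a ∈ Finset.Icc 1 ⌊x⌋₊, (Nat.totient a : ℝ) := by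
  have hmain : (9 / π ^ 2) * x ^ 2 * (1 - (π ^ 2 / 9) * (Real.log x + 9) / (3 * x)) =
      9 / π ^ 2 * x ^ 2 - x * log x / 3 - 3 * x := by
    field_simp
    ring
  have hIcc : Finset.Icc 1 ⌊x⌋₊ = Finset.Ioc 0 ⌊x⌋₊ := Finset.Icc_add_one_left_eq_Ioc 0 ⌊x⌋₊
  rw [hmain, hIcc, ← weightedTotientSum_eq_sub]
  rcases lt_or_ge x 5 with hx5 | hx5
  · exact le_weightedTotientSum_of_lt_five hx.le hx5
  · exact le_weightedTotientSum_of_five_le hx5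
end

section
/- For every positive integer r, (2r)!/(2^r · r!) ≤ √2 · (2r/e)^r. -/
/-! Stirling's ratios `n! / (√(2n) (n / e) ^ n)` decrease for `n ≥ 1`. Comparing the ratios at
`m ≤ n` bounds `n! / m!` by the quotient of the Stirling approximations. For `m = r` and `n = 2r`
this quotient is `√2 · 2 ^ r · (2r / e) ^ r`. -/

open scoped Nat

theorem stirlingSeq_antitoneOn : AntitoneOn Stirling.stirlingSeq (Set.Ici 1) :=
  antitone_add_nat_iff_antitoneOn_nat_Ici.mp Stirling.stirlingSeq'_antitone

theorem factorial_div_factorial_le {m n : ℕ} (hm : 0 < m) (hmn : m ≤ n) :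
    (n ! : ℝ) / m ! ≤ √(n / m) * ((n / Real.exp 1) ^ n / (m / Real.exp 1) ^ m) := by
  have hn : 0 < n := hm.trans_le hmn
  have hratio : (n ! : ℝ) / (√(2 * n) * (n / Real.exp 1) ^ n) ≤
      m ! / (√(2 * m) * (m / Real.exp 1) ^ m) :=
    stirlingSeq_antitoneOn hm hn hmn
  calc (n ! : ℝ) / m !
      ≤ (√(2 * n) * (n / Real.exp 1) ^ n) / (√(2 * m) * (m / Real.exp 1) ^ m) := by
        rw [div_le_div_iff₀ (by positivity) (by positivity)] at hratio ⊢
        rwa [mul_comm (√(2 * n) * _)]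
    _ = √(n / m) * ((n / Real.exp 1) ^ n / (m / Real.exp 1) ^ m) := by
        rw [mul_div_mul_comm, ← Real.sqrt_div (by positivity), mul_div_mul_left _ _ two_ne_zero]

theorem mul_pow_two_mul_div_pow {G₀ : Type*} [CommGroupWithZero G₀] (a x : G₀) (r : ℕ) :
    (a * x) ^ (2 * r) / x ^ r = a ^ r * (a * x) ^ r := by
  have hbase : (a * x) ^ 2 / x = a * (a * x) := by
    rw [mul_pow, mul_div_assoc, sq x, mul_self_div_self, sq, mul_assoc]
  rw [pow_mul, ← div_pow, hbase, mul_pow]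

/-- For every positive integer `r`, `(2r)!/(2^r r!) ≤ √2 (2r/e)^r`. -/
theorem stmt_8 (r : ℕ) (hr : 0 < r) :
    ((2 * r).factorial : ℝ) / (2 ^ r * r.factorial) ≤
      Real.sqrt 2 * ((2 * r : ℝ) / Real.exp 1) ^ r := by
  have hsqrt : √(((2 * r : ℕ) : ℝ) / r) = √2 := by
    rw [Nat.cast_mul, Nat.cast_ofNat, mul_div_cancel_right₀ _ (by positivity)]
  have hpow : (((2 * r : ℕ) : ℝ) / Real.exp 1) ^ (2 * r) / (r / Real.exp 1) ^ r =
      2 ^ r * (2 * r / Real.exp 1) ^ r := by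
    rw [Nat.cast_mul, Nat.cast_ofNat, mul_div_assoc, mul_pow_two_mul_div_pow]
  have hfactorial := factorial_div_factorial_le hr (show r ≤ 2 * r by lia)
  rw [hsqrt, hpow, mul_left_comm] at hfactorial
  rwa [div_mul_eq_div_div_swap, div_le_iff₀' (by positivity)]
end

section
/- Let n be a positive integer and p a real number with log p > max{exp(8/3), 8(n−1)} (so in particular n ≤ (1/4) log p). Set A = (n/(n+1)) e^{1/n} and h = ⌈A log p⌉. Let u₁ be a positive integer with u₁ ≤ (h−1)^k for some nonnegative integer k ≤ n−1, and suppose H > (π/3)√(2e) (n/(n+1)) p^{1/4} (log p)^{(n+1)/2}. Then X/u₁ ≥ X*, where X = H/(2h) and X* = (π/3)(2e)^{-1/2} ((n+1)/n)^{n-1} p^{1/4} (log p)^{-(n-1)/2} (1 − ((n+1)/n) e^{-1/n} (log p)^{-1}). -/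
open Real

/-!
Put `L = log p` and `c = A * L`. Since `A ^ n = (n / (n + 1)) ^ n * e`, the bound assumed on `H`
is `2 * c ^ n` times the leading factor of `X*`, and the correction factor of `X*` is `1 - 1 / c`.
So it suffices to compare `h * u₁` with `c ^ n / (1 - 1 / c)`: when `1 < c`, rounding up gives
`h ≤ c + 1` and `u₁ ≤ c ^ (n - 1)`, while `(c + 1) * (1 - 1 / c) = c - 1 / c ≤ c`. When `c ≤ 1`
the number `X*` is nonpositive.
-/

section Ceil

variable {R : Type*} [Field R] [LinearOrder R] [IsStrictOrderedRing R]

lemma one_sub_inv_div_le_inv_add_one {c : R} (hc : 0 < c) : (1 - c⁻¹) / c ≤ (c + 1)⁻¹ := by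
  rw [div_le_iff₀ hc, inv_mul_eq_div, le_div_iff₀ (by positivity)]
  calc (1 - c⁻¹) * (c + 1) = c - c⁻¹ := by
        field_simp
        ring
    _ ≤ c := sub_le_self c (by positivity)

variable [FloorSemiring R]

lemma natCast_ceil_sub_one_le {c : R} (hc : 0 ≤ c) : ((⌈c⌉₊ - 1 : ℕ) : R) ≤ c :=
  (Nat.cast_le.2 (Nat.sub_le_of_le_add (Nat.ceil_le_floor_add_one c))).trans (Nat.floor_le hc)

lemma le_pow_of_le_ceil_sub_one_pow {c u : R} {k m : ℕ} (hc : 1 ≤ c) (hkm : k ≤ m)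
    (hu : u ≤ ((⌈c⌉₊ - 1 : ℕ) : R) ^ k) : u ≤ c ^ m :=
  calc u ≤ ((⌈c⌉₊ - 1 : ℕ) : R) ^ k := hu
    _ ≤ c ^ k := by
        gcongr
        exact natCast_ceil_sub_one_le (zero_le_one.trans hc)
    _ ≤ c ^ m := pow_le_pow_right₀ hc hkm

lemma div_pow_succ_mul_one_sub_inv_le_div_ceil_div {K H c u : R} {k m : ℕ} (hK : 0 ≤ K)
    (hKH : K ≤ H) (hc : 0 < c) (hu : 0 < u) (hkm : k ≤ m)
    (huc : u ≤ ((⌈c⌉₊ - 1 : ℕ) : R) ^ k) :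
    K / c ^ (m + 1) * (1 - c⁻¹) ≤ H / ⌈c⌉₊ / u := by
  have hH : 0 ≤ H := hK.trans hKH
  rcases le_total c 1 with hc_le | hc_ge
  · calc K / c ^ (m + 1) * (1 - c⁻¹) ≤ 0 :=
          mul_nonpos_of_nonneg_of_nonpos (by positivity)
            (sub_nonpos.2 ((one_le_inv₀ hc).2 hc_le))
      _ ≤ H / ⌈c⌉₊ / u := by positivity
  · have hu_le : u ≤ c ^ m := le_pow_of_le_ceil_sub_one_pow hc_ge hkm huc
    have hceil_le : (⌈c⌉₊ : R) ≤ c + 1 := (Nat.ceil_lt_add_one hc.le).le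
    calc K / c ^ (m + 1) * (1 - c⁻¹) = K / c ^ m * ((1 - c⁻¹) / c) := by
          rw [pow_succ]
          ring
      _ ≤ K / c ^ m * (c + 1)⁻¹ := by
          gcongr
          exact one_sub_inv_div_le_inv_add_one hc
      _ = K / (c + 1) / c ^ m := by ring
      _ ≤ H / ⌈c⌉₊ / u := by gcongr

end Ceil

lemma rpow_nonneg_of_abs_le_half (x : ℝ) {y : ℝ} (hy : |y| ≤ 1 / 2) : 0 ≤ x ^ y := by
  rcases le_or_gt 0 x with hx | hx
  · exact rpow_nonneg hx y
  · have ⟨hy_lower, hy_upper⟩ := abs_le.1 hy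
    have hcos : 0 ≤ cos (y * π) :=
      cos_nonneg_of_neg_pi_div_two_le_of_le (by nlinarith [pi_pos]) (by nlinarith [pi_pos])
    rw [rpow_def_of_neg hx]
    positivity

lemma rpow_neg_one_div_two_eq_sqrt_div_self {x : ℝ} (hx : 0 ≤ x) :
    x ^ (-(1 : ℝ) / 2) = √x / x := by
  rw [sqrt_div_self, sqrt_eq_rpow, neg_div, rpow_neg hx]

lemma mul_exp_one_div_pow (a : ℝ) {n : ℕ} (hn : n ≠ 0) :
    (a * exp (1 / (n : ℝ))) ^ n = a ^ n * exp 1 := by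
  rw [mul_pow, ← exp_nat_mul, mul_one_div_cancel (Nat.cast_ne_zero.2 hn)]

lemma sqrt_two_exp_mul_rpow_div_pow {n : ℕ} (hn : n ≠ 0) {a L : ℝ} (ha : a ≠ 0) (hL : L ≠ 0) :
    √(2 * exp 1) * a * L ^ (((n : ℝ) + 1) / 2) / 2 / (a * exp (1 / (n : ℝ)) * L) ^ n =
      (2 * exp 1) ^ (-(1 : ℝ) / 2) * a⁻¹ ^ (n - 1) * L ^ (-(((n : ℝ) - 1) / 2)) := by
  have hL_rpow : L ^ (-(((n : ℝ) - 1) / 2)) = L ^ (((n : ℝ) + 1) / 2) / L ^ n := by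
    rw [← rpow_sub_natCast hL]
    congr 1
    ring
  rw [mul_pow, mul_exp_one_div_pow a hn, rpow_neg_one_div_two_eq_sqrt_div_self (by positivity),
    inv_pow_sub₀ ha (Nat.one_le_iff_ne_zero.2 hn), pow_one, hL_rpow]
  field_simp

theorem stmt_14_general (n : ℕ) (hn : 0 < n) (p : ℝ) (hp : 0 < log p)
    (A : ℝ) (hA : A = ((n : ℝ) / ((n : ℝ) + 1)) * exp (1 / (n : ℝ)))
    (h : ℕ) (hh : h = ⌈A * log p⌉₊)
    (u₁ : ℝ) (hu₁ : 0 < u₁) (k : ℕ) (hk : k ≤ n - 1) (hu : u₁ ≤ ((h - 1 : ℕ) : ℝ) ^ k)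
    (H : ℝ)
    (hH : (π / 3) * √(2 * exp 1) * ((n : ℝ) / ((n : ℝ) + 1)) *
      p ^ ((1 : ℝ) / 4) * log p ^ (((n : ℝ) + 1) / 2) ≤ H) :
    (π / 3) * (2 * exp 1) ^ (-(1 : ℝ) / 2) * (((n : ℝ) + 1) / (n : ℝ)) ^ (n - 1) *
        p ^ ((1 : ℝ) / 4) * log p ^ (-(((n : ℝ) - 1) / 2)) *
        (1 - ((n : ℝ) + 1) / (n : ℝ) * exp (-1 / (n : ℝ)) / log p) ≤
      H / (2 * h) / u₁ := by
  -- `Real.log p = log |p|`, so `p < -1` is possible here.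
  have hp_rpow : 0 ≤ p ^ ((1 : ℝ) / 4) := rpow_nonneg_of_abs_le_half p (by norm_num [abs_of_pos])
  have hc : 0 < A * log p := by
    rw [hA]
    positivity
  have hc_inv : ((n : ℝ) + 1) / n * exp (-1 / (n : ℝ)) / log p = (A * log p)⁻¹ := by
    rw [hA, mul_inv, mul_inv, inv_div, ← exp_neg, neg_div, div_eq_mul_inv _ (log p)]
  have hlead := sqrt_two_exp_mul_rpow_div_pow hn.ne' (a := (n : ℝ) / (n + 1)) (by positivity) hp.ne'
  rw [← hA, inv_div] at hlead
  have hbound := div_pow_succ_mul_one_sub_inv_le_div_ceil_div (by positivity)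
    (div_le_div_of_nonneg_right hH zero_le_two) hc hu₁ hk (hh ▸ hu)
  rw [← hh, div_div H, Nat.sub_add_cancel hn] at hbound
  rw [hc_inv]
  refine le_of_eq_of_le ?_ hbound
  linear_combination (-(π / 3) * p ^ ((1 : ℝ) / 4) * (1 - (A * log p)⁻¹)) * hlead

/-- Let `n ≥ 1`, `p` real with `log p > max{exp(8/3), 8(n-1)}`, `A = (n/(n+1)) e^(1/n)`,
`h = ⌈A log p⌉`, and `u₁ ≤ (h-1)^k` with `k ≤ n-1`.  If
`H > (π/3)√(2e)(n/(n+1)) p^(1/4) (log p)^((n+1)/2)`, then `X/u₁ ≥ X*` where `X = H/(2h)` and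
`X* = (π/3)(2e)^(-1/2)((n+1)/n)^(n-1) p^(1/4) (log p)^(-(n-1)/2) (1 - ((n+1)/n) e^(-1/n)/log p)`. -/
theorem stmt_14 (n : ℕ) (hn : 0 < n) (p : ℝ)
    (hp : Real.log p > max (Real.exp (8 / 3)) (8 * ((n : ℝ) - 1)))
    (A : ℝ) (hA : A = ((n : ℝ) / ((n : ℝ) + 1)) * Real.exp (1 / (n : ℝ)))
    (h : ℕ) (hh : h = ⌈A * Real.log p⌉₊)
    (u₁ : ℕ) (hu₁ : 0 < u₁) (k : ℕ) (hk : k ≤ n - 1) (hu : u₁ ≤ (h - 1) ^ k)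
    (H : ℝ)
    (hH : H > (π / 3) * Real.sqrt (2 * Real.exp 1) * ((n : ℝ) / ((n : ℝ) + 1)) *
      p ^ ((1 : ℝ) / 4) * Real.log p ^ (((n : ℝ) + 1) / 2)) :
    (π / 3) * (2 * Real.exp 1) ^ (-(1 : ℝ) / 2) * (((n : ℝ) + 1) / (n : ℝ)) ^ (n - 1) *
        p ^ ((1 : ℝ) / 4) * Real.log p ^ (-(((n : ℝ) - 1) / 2)) *
        (1 - ((n : ℝ) + 1) / (n : ℝ) * Real.exp (-1 / (n : ℝ)) / Real.log p) ≤
      H / (2 * h) / u₁ := by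
  exact stmt_14_general n hn p ((lt_max_of_lt_left (exp_pos _)).trans hp) A hA h hh
    u₁ (mod_cast hu₁) k hk (mod_cast hu) H hH.le
end
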